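/- Suppose F : Z → ℝ^n is ℓ_F-Lipschitz and α-strongly monotone (α > 0) and G : Z → ℝ is ℓ_G-smooth and convex, and the AMP iteration is run with constant parameters α_k ≡ α_0 = (1/4)·min{α/ℓ_F, √(α/ℓ_G)} and γ_k = α_0/α. For any fixed z ∈ Z define the energy E_k = Q(z_k^{ag}, z) + (α/2)‖z − w_k‖², where Q(z̃, z) = G(z̃) − G(z) + (z̃ − z)ᵀ F(z). Then E_{k+1} ≤ (1 − α_0) E_k for all k ≥ 1. -/

import Mathlib

open scoped InnerProductSpace

noncomputable section

/-- `p = argmin_{z ∈ Z} γ ⟪z - w, u⟫ + ½ ‖z - w‖²`, i.e. `p` is the Euclidean projection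
onto `Z` of `w - γ u`. -/
def IsArgminStep {E : Type*} [NormedAddCommGroup E] [InnerProductSpace ℝ E]
    (Z : Set E) (w : E) (γ : ℝ) (u : E) (p : E) : Prop :=
  p ∈ Z ∧ ∀ z ∈ Z, γ * ⟪p - w, u⟫_ℝ + ‖p - w‖ ^ 2 / 2 ≤ γ * ⟪z - w, u⟫_ℝ + ‖z - w‖ ^ 2 / 2

/-- The accelerated mirror-prox (AMP) iteration on `Z` for the operator `F` and the gradient
`G'` of `G`, with parameters `a k` (the `α_k`) and `g k` (the `γ_k`), and iterates
`zmd k = z_k^{md}`, `z k = z_k`, `w k = w_k`, `zag k = z_k^{ag}` for `k ≥ 1`: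
initialization `z 1 = z_1^{ag} = w 1 ∈ Z` and, for `k ≥ 1`,
`z_k^{md} = (1 - α_k) z_k^{ag} + α_k w_k`,
`z_{k+1} = argmin_{z ∈ Z} γ_k ⟪z - w_k, F(w_k) + ∇G(z_k^{md})⟫ + ½‖z - w_k‖²`,
`w_{k+1} = argmin_{z ∈ Z} γ_k ⟪z - w_k, F(z_{k+1}) + ∇G(z_k^{md})⟫ + ½‖z - w_k‖²`,
`z_{k+1}^{ag} = (1 - α_k) z_k^{ag} + α_k z_{k+1}`. -/
def IsAMP {E : Type*} [NormedAddCommGroup E] [InnerProductSpace ℝ E]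
    (Z : Set E) (F : E → E) (G' : E → E) (a g : ℕ → ℝ) (zmd z w zag : ℕ → E) : Prop :=
  z 1 = w 1 ∧ zag 1 = w 1 ∧ w 1 ∈ Z ∧
  ∀ k, 1 ≤ k →
    zmd k = (1 - a k) • zag k + a k • w k ∧
    IsArgminStep Z (w k) (g k) (F (w k) + G' (zmd k)) (z (k + 1)) ∧
    IsArgminStep Z (w k) (g k) (F (z (k + 1)) + G' (zmd k)) (w (k + 1)) ∧
    zag (k + 1) = (1 - a k) • zag k + a k • z (k + 1)

section

variable {E : Type*} [NormedAddCommGroup E] [InnerProductSpace ℝ E]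

/-- The three-point inequality for a proximal step on a convex set. -/
theorem IsArgminStep.three_point {Z : Set E} (hZ : Convex ℝ Z) {w u p : E} {γ : ℝ}
    (h : IsArgminStep Z w γ u p) {y : E} (hy : y ∈ Z) :
    γ * ⟪p - y, u⟫_ℝ ≤ ‖y - w‖ ^ 2 / 2 - ‖y - p‖ ^ 2 / 2 - ‖p - w‖ ^ 2 / 2 := by
  have key : ∀ t ∈ Set.Ioc (0 : ℝ) 1,
      0 ≤ γ * ⟪y - p, u⟫_ℝ + ⟪y - p, p - w⟫_ℝ + t * (‖y - p‖ ^ 2 / 2) := by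
    rintro t ⟨ht0, ht1⟩
    have hmin := h.2 (p + t • (y - p)) (hZ.add_smul_sub_mem h.1 hy ⟨ht0.le, ht1⟩)
    have hsplit : p + t • (y - p) - w = t • (y - p) + (p - w) := by abel
    rw [hsplit, norm_add_sq_real, inner_add_left, real_inner_smul_left, real_inner_smul_left,
      norm_smul, mul_pow, Real.norm_eq_abs, sq_abs] at hmin
    refine (mul_nonneg_iff_of_pos_left ht0).1 ?_
    linarith
  have hlim : Filter.Tendsto
      (fun t : ℝ => γ * ⟪y - p, u⟫_ℝ + ⟪y - p, p - w⟫_ℝ + t * (‖y - p‖ ^ 2 / 2))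
      (nhdsWithin 0 (Set.Ioi 0))
      (nhds (γ * ⟪y - p, u⟫_ℝ + ⟪y - p, p - w⟫_ℝ + 0 * (‖y - p‖ ^ 2 / 2))) :=
    (Continuous.tendsto (by fun_prop) 0).mono_left nhdsWithin_le_nhds
  have hnonneg := ge_of_tendsto hlim
    (Filter.mem_of_superset (Ioc_mem_nhdsGT zero_lt_one) key)
  have hnorm : ‖y - w‖ ^ 2 = ‖y - p‖ ^ 2 + 2 * ⟪y - p, p - w⟫_ℝ + ‖p - w‖ ^ 2 := by
    rw [← norm_add_sq_real, sub_add_sub_cancel]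
  have hneg : ⟪p - y, u⟫_ℝ = -⟪y - p, u⟫_ℝ := by rw [← inner_neg_left, neg_sub]
  rw [hneg]
  linarith

/-- One extragradient step: `p` is the prediction from `w` along `u`, and `q` the correction
from `w` along `v`. -/
theorem IsArgminStep.extragradient {Z : Set E} (hZ : Convex ℝ Z) {w u v p q : E} {γ : ℝ}
    (hp : IsArgminStep Z w γ u p) (hq : IsArgminStep Z w γ v q) {y : E} (hy : y ∈ Z) :
    γ * ⟪p - y, v⟫_ℝ ≤
      (‖y - w‖ ^ 2 - ‖y - q‖ ^ 2 - ‖p - w‖ ^ 2 + γ ^ 2 * ‖v - u‖ ^ 2) / 2 := by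
  have h₁ := hq.three_point hZ hy
  have h₂ := hp.three_point hZ hq.1
  have hinner : ⟪p - y, v⟫_ℝ = ⟪q - y, v⟫_ℝ + ⟪p - q, u⟫_ℝ + ⟪p - q, v - u⟫_ℝ := by
    simp only [inner_sub_left, inner_sub_right]
    ring
  have hyoung := sq_nonneg ‖(q - p) + γ • (v - u)‖
  rw [norm_add_sq_real, real_inner_smul_right, norm_smul, mul_pow, Real.norm_eq_abs, sq_abs,
    ← neg_sub p q, inner_neg_left, norm_neg, norm_sub_rev p q] at hyoung
  rw [hinner]
  linarith

theorem IsAMP.mem {Z : Set E} (hZ : Convex ℝ Z) {F G' : E → E} {a g : ℕ → ℝ}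
    {zmd z w zag : ℕ → E} (h : IsAMP Z F G' a g zmd z w zag)
    (ha : ∀ k, a k ∈ Set.Icc (0 : ℝ) 1) {k : ℕ} (hk : 1 ≤ k) : w k ∈ Z ∧ zag k ∈ Z := by
  induction k, hk using Nat.le_induction with
  | base => exact ⟨h.2.2.1, h.2.1 ▸ h.2.2.1⟩
  | succ k hk ih =>
    obtain ⟨-, hz, hw, hzag⟩ := h.2.2.2 k hk
    refine ⟨hw.1, hzag ▸ hZ ih.2 hz.1 ?_ (ha k).1 (by ring)⟩
    linarith [(ha k).2]

variable [CompleteSpace E]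

theorem HasGradientAt.hasDerivAt_comp_line {G : E → ℝ} {g x v : E} {t : ℝ}
    (h : HasGradientAt G g (x + t • v)) :
    HasDerivAt (fun s : ℝ => G (x + s • v)) ⟪g, v⟫_ℝ t := by
  have hline : HasDerivAt (fun s : ℝ => x + s • v) v t := by
    simpa using ((hasDerivAt_id t).smul_const v).const_add x
  have hcomp := h.hasFDerivAt.comp_hasDerivAt t hline
  rwa [InnerProductSpace.toDual_apply_apply] at hcomp

/-- The gradient inequality for convex functions. -/
theorem ConvexOn.add_inner_gradient_le {Z : Set E} {G : E → ℝ} (hG : ConvexOn ℝ Z G)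
    {x y g : E} (hx : x ∈ Z) (hy : y ∈ Z) (hg : HasGradientAt G g x) :
    G x + ⟪g, y - x⟫_ℝ ≤ G y := by
  have hconv := hG.comp_affineMap (AffineMap.lineMap x y : ℝ →ᵃ[ℝ] E)
  have hcomp : G ∘ (AffineMap.lineMap x y : ℝ →ᵃ[ℝ] E) = fun s : ℝ => G (x + s • (y - x)) := by
    ext s
    simp [AffineMap.lineMap_apply, add_comm]
  rw [hcomp] at hconv
  have hder : HasDerivAt (fun s : ℝ => G (x + s • (y - x))) ⟪g, y - x⟫_ℝ 0 :=
    HasGradientAt.hasDerivAt_comp_line (by simpa using hg)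
  have hslope := hconv.le_slope_of_hasDerivAt (x := 0) (y := 1) (by simpa using hx)
    (by simpa using hy) zero_lt_one hder
  simp [slope_def_field] at hslope
  linarith

/-- The descent lemma: a function with `ℓ`-Lipschitz gradient on a convex set is bounded above
by its quadratic model. -/
theorem Convex.le_add_inner_gradient_add_sq {Z : Set E} (hZ : Convex ℝ Z) {G : E → ℝ} {G' : E → E}
    {ℓ : ℝ} (hgrad : ∀ z ∈ Z, HasGradientAt G (G' z) z)
    (hlip : ∀ z ∈ Z, ∀ z' ∈ Z, ‖G' z - G' z'‖ ≤ ℓ * ‖z - z'‖) {x y : E} (hx : x ∈ Z)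
    (hy : y ∈ Z) :
    G y ≤ G x + ⟪G' x, y - x⟫_ℝ + ℓ / 2 * ‖y - x‖ ^ 2 := by
  set v := y - x with hv
  have hmem : ∀ t ∈ Set.Icc (0 : ℝ) 1, x + t • v ∈ Z := fun t ht =>
    hZ.add_smul_sub_mem hx hy ht
  have hf : ∀ t ∈ Set.Icc (0 : ℝ) 1,
      HasDerivAt (fun s : ℝ => G (x + s • v)) ⟪G' (x + t • v), v⟫_ℝ t := fun t ht =>
    (hgrad _ (hmem t ht)).hasDerivAt_comp_line
  have hB : ∀ t : ℝ, HasDerivAt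
      (fun s : ℝ => G x + s * ⟪G' x, v⟫_ℝ + ℓ / 2 * ‖v‖ ^ 2 * s ^ 2)
      (⟪G' x, v⟫_ℝ + ℓ * ‖v‖ ^ 2 * t) t := fun t => by
    refine ((((hasDerivAt_id t).mul_const ⟪G' x, v⟫_ℝ).const_add (G x)).add
      ((hasDerivAt_pow 2 t).const_mul (ℓ / 2 * ‖v‖ ^ 2))).congr_deriv ?_
    push_cast
    ring
  have hbound : ∀ t ∈ Set.Ico (0 : ℝ) 1,
      ⟪G' (x + t • v), v⟫_ℝ ≤ ⟪G' x, v⟫_ℝ + ℓ * ‖v‖ ^ 2 * t := fun t ht => by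
    have hL := hlip _ (hmem t ⟨ht.1, ht.2.le⟩) x hx
    rw [add_sub_cancel_left, norm_smul, Real.norm_of_nonneg ht.1] at hL
    have hCS := (real_inner_le_norm (G' (x + t • v) - G' x) v).trans
      (mul_le_mul_of_nonneg_right hL (norm_nonneg v))
    rw [inner_sub_left] at hCS
    linarith
  have hle := image_le_of_deriv_right_le_deriv_boundary
    (fun t ht => (hf t ht).continuousAt.continuousWithinAt)
    (fun t ht => (hf t ⟨ht.1, ht.2.le⟩).hasDerivWithinAt) (by simp)
    (fun t _ => (hB t).continuousAt.continuousWithinAt)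
    (fun t _ => (hB t).hasDerivWithinAt) hbound (Set.right_mem_Icc.2 zero_le_one)
  simpa [hv] using hle

/-- Energy decrease for one AMP step with step parameter `a` and step size `a / α`. -/
theorem amp_energy_step {Z : Set E} (hZ : Convex ℝ Z) {ℓF ℓG α a : ℝ} (hα : 0 < α)
    (ha : 0 ≤ a) (ha' : a ≤ 1 / 4) (haF : a * ℓF ≤ α / 4)
    (haG : ℓG * a ^ 2 ≤ α / 16) {F : E → E}
    (hFlip : ∀ z ∈ Z, ∀ z' ∈ Z, ‖F z - F z'‖ ≤ ℓF * ‖z - z'‖)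
    (hFsmono : ∀ z ∈ Z, ∀ z' ∈ Z, α * ‖z - z'‖ ^ 2 ≤ ⟪z - z', F z - F z'⟫_ℝ)
    {G : E → ℝ} {G' : E → E} (hGconv : ConvexOn ℝ Z G)
    (hGgrad : ∀ z ∈ Z, HasGradientAt G (G' z) z)
    (hGlip : ∀ z ∈ Z, ∀ z' ∈ Z, ‖G' z - G' z'‖ ≤ ℓG * ‖z - z'‖)
    {m p w q b c y : E} (hw : w ∈ Z) (hb : b ∈ Z) (hy : y ∈ Z)
    (hm : m = (1 - a) • b + a • w) (hp : IsArgminStep Z w (a / α) (F w + G' m) p)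
    (hq : IsArgminStep Z w (a / α) (F p + G' m) q) (hc : c = (1 - a) • b + a • p) :
    (G c - G y + ⟪c - y, F y⟫_ℝ) + α / 2 * ‖y - q‖ ^ 2 ≤
      (1 - a) * ((G b - G y + ⟪b - y, F y⟫_ℝ) + α / 2 * ‖y - w‖ ^ 2) := by
  have hmZ : m ∈ Z := hm ▸ hZ hb hw (by linarith) ha (by ring)
  have hcZ : c ∈ Z := hc ▸ hZ hb hp.1 (by linarith) ha (by ring)
  have hcm : c - m = a • (p - w) := by rw [hc, hm]; module
  have hdesc := hZ.le_add_inner_gradient_add_sq hGgrad hGlip hmZ hcZ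
  have hgb := hGconv.add_inner_gradient_le hmZ hb (hGgrad m hmZ)
  have hgy := hGconv.add_inner_gradient_le hmZ hy (hGgrad m hmZ)
  have hmono := hFsmono p hp.1 y hy
  have hextra := hp.extragradient hZ hq hy
  have hnorm_cm : ‖c - m‖ ^ 2 = a ^ 2 * ‖p - w‖ ^ 2 := by
    rw [hcm, norm_smul, mul_pow, Real.norm_eq_abs, sq_abs]
  have hinner_cm : ⟪G' m, c - m⟫_ℝ = (1 - a) * ⟪G' m, b - m⟫_ℝ
      + a * ⟪G' m, y - m⟫_ℝ + a * ⟪p - y, G' m⟫_ℝ := by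
    rw [real_inner_comm (G' m) (p - y), ← real_inner_smul_right, ← real_inner_smul_right,
      ← real_inner_smul_right, ← inner_add_right, ← inner_add_right, hc]
    congr 1
    module
  have hinner_cy : ⟪c - y, F y⟫_ℝ = (1 - a) * ⟪b - y, F y⟫_ℝ + a * ⟪p - y, F y⟫_ℝ := by
    rw [← real_inner_smul_left, ← real_inner_smul_left, ← inner_add_left, hc]
    congr 1
    module
  have hQ : G c - G y + ⟪c - y, F y⟫_ℝ ≤ (1 - a) * (G b - G y + ⟪b - y, F y⟫_ℝ)
      + a * ⟪p - y, F p + G' m⟫_ℝ - a * α * ‖p - y‖ ^ 2 + ℓG * a ^ 2 / 2 * ‖p - w‖ ^ 2 := by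
    rw [inner_sub_right] at hmono
    rw [inner_add_right, hinner_cy]
    rw [hinner_cm, hnorm_cm] at hdesc
    linarith [mul_le_mul_of_nonneg_left hgb (by linarith : 0 ≤ 1 - a),
      mul_le_mul_of_nonneg_left hgy ha, mul_le_mul_of_nonneg_left hmono ha]
  have hFstep : (a / α) ^ 2 * ‖F p + G' m - (F w + G' m)‖ ^ 2 ≤ ‖p - w‖ ^ 2 / 16 := by
    have hcoef : a / α * ℓF ≤ 1 / 4 := by
      rw [div_mul_eq_mul_div, div_le_iff₀ hα]
      linarith
    have hle : a / α * ‖F p - F w‖ ≤ 1 / 4 * ‖p - w‖ := calc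
      a / α * ‖F p - F w‖ ≤ a / α * (ℓF * ‖p - w‖) := by gcongr; exact hFlip p hp.1 w hw
      _ = a / α * ℓF * ‖p - w‖ := by ring
      _ ≤ 1 / 4 * ‖p - w‖ := by gcongr
    rw [add_sub_add_right_eq_sub, ← mul_pow]
    calc (a / α * ‖F p - F w‖) ^ 2 ≤ (1 / 4 * ‖p - w‖) ^ 2 := by gcongr
      _ = ‖p - w‖ ^ 2 / 16 := by ring
  have hprox : a * ⟪p - y, F p + G' m⟫_ℝ ≤
      α / 2 * ‖y - w‖ ^ 2 - α / 2 * ‖y - q‖ ^ 2 - 15 / 32 * α * ‖p - w‖ ^ 2 := by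
    have hscale : a = α * (a / α) := by field_simp
    have := mul_le_mul_of_nonneg_left (hextra.trans (div_le_div_of_nonneg_right
      (add_le_add_right hFstep _) zero_le_two)) hα.le
    rw [← mul_assoc, ← hscale] at this
    linarith
  have htri : ‖y - w‖ ^ 2 ≤ 2 * ‖p - y‖ ^ 2 + 2 * ‖p - w‖ ^ 2 := by
    have := parallelogram_law_with_norm ℝ (p - w) (p - y)
    rw [sub_sub_sub_cancel_left] at this
    nlinarith [sq_nonneg ‖p - w + (p - y)‖]
  have h₁ := mul_le_mul_of_nonneg_left htri (by positivity : 0 ≤ a * α / 2)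
  have h₂ := mul_le_mul_of_nonneg_right haG (sq_nonneg ‖p - w‖)
  have h₃ := mul_le_mul_of_nonneg_right ha' (by positivity : 0 ≤ α * ‖p - w‖ ^ 2)
  have h₄ : 0 ≤ α * ‖p - w‖ ^ 2 := by positivity
  linarith

end

/-- energy decrease in the strongly monotone case.
Suppose `F` is `ℓ_F`-Lipschitz and `α`-strongly monotone on `Z` (`α > 0`), `G` is
`ℓ_G`-smooth and convex on `Z`, and the AMP iteration is run with the constant parameters
`α_k ≡ α_0 = (1/4) min {α/ℓ_F, √(α/ℓ_G)}` and `γ_k = α_0/α`.  For fixed `z ∈ Z`, the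
energy `E_k = Q(z_k^{ag}, z) + (α/2)‖z - w_k‖²` with
`Q(z̃, z) = G(z̃) - G(z) + ⟪z̃ - z, F(z)⟫` satisfies `E_{k+1} ≤ (1 - α_0) E_k` for all
`k ≥ 1`. -/
theorem statement_7 {n : ℕ} (Z : Set (EuclideanSpace ℝ (Fin n)))
    (hZne : Z.Nonempty) (hZclosed : IsClosed Z) (hZconvex : Convex ℝ Z)
    (ℓF ℓG α : ℝ) (hℓF : 0 < ℓF) (hℓG : 0 < ℓG) (hα : 0 < α)
    (F : EuclideanSpace ℝ (Fin n) → EuclideanSpace ℝ (Fin n))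
    (hFlip : ∀ z ∈ Z, ∀ z' ∈ Z, ‖F z - F z'‖ ≤ ℓF * ‖z - z'‖)
    (hFsmono : ∀ z ∈ Z, ∀ z' ∈ Z, α * ‖z - z'‖ ^ 2 ≤ ⟪z - z', F z - F z'⟫_ℝ)
    (G : EuclideanSpace ℝ (Fin n) → ℝ) (G' : EuclideanSpace ℝ (Fin n) → EuclideanSpace ℝ (Fin n))
    (hGconv : ConvexOn ℝ Z G)
    (hGgrad : ∀ z ∈ Z, HasGradientAt G (G' z) z)
    (hGlip : ∀ z ∈ Z, ∀ z' ∈ Z, ‖G' z - G' z'‖ ≤ ℓG * ‖z - z'‖)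
    (zmd z w zag : ℕ → EuclideanSpace ℝ (Fin n))
    (hAMP : IsAMP Z F G' (fun _ => min (α / ℓF) (Real.sqrt (α / ℓG)) / 4)
      (fun _ => min (α / ℓF) (Real.sqrt (α / ℓG)) / 4 / α) zmd z w zag)
    (y : EuclideanSpace ℝ (Fin n)) (hy : y ∈ Z) :
    ∀ k : ℕ, 1 ≤ k →
      (G (zag (k + 1)) - G y + ⟪zag (k + 1) - y, F y⟫_ℝ) + α / 2 * ‖y - w (k + 1)‖ ^ 2 ≤
        (1 - min (α / ℓF) (Real.sqrt (α / ℓG)) / 4) *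
          ((G (zag k) - G y + ⟪zag k - y, F y⟫_ℝ) + α / 2 * ‖y - w k‖ ^ 2) := by
  intro k hk
  obtain ⟨hm, hp, hq, hc⟩ := hAMP.2.2.2 k hk
  set a := min (α / ℓF) (Real.sqrt (α / ℓG)) / 4 with ha_def
  have ha : 0 ≤ a := by positivity
  have haF : a * ℓF ≤ α / 4 := by
    have := (le_div_iff₀ hℓF).1 (min_le_left (α / ℓF) (Real.sqrt (α / ℓG)))
    rw [ha_def]
    linarith
  have haG : ℓG * a ^ 2 ≤ α / 16 := by
    have hle : a ≤ Real.sqrt (α / ℓG) / 4 := by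
      rw [ha_def]
      gcongr
      exact min_le_right _ _
    calc ℓG * a ^ 2 ≤ ℓG * (Real.sqrt (α / ℓG) / 4) ^ 2 := by gcongr
      _ = α / 16 := by
        rw [div_pow, Real.sq_sqrt (by positivity)]
        field_simp
        norm_num
  rcases Z.subsingleton_or_nontrivial with hsub | hnt
  · -- With a single feasible point, `α ≤ ℓF` may fail, but all energies vanish.
    have hzag : ∀ j, 1 ≤ j → zag j = y := by
      intro j hj
      induction j, hj using Nat.le_induction with
      | base => exact hAMP.2.1.trans (hsub hAMP.2.2.1 hy)
      | succ j hj ih =>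
        obtain ⟨-, hz, -, hstep⟩ := hAMP.2.2.2 j hj
        rw [hstep, ih, hsub hz.1 hy]
        module
    have hw : ∀ j, 1 ≤ j → w j = y := by
      intro j hj
      induction j, hj using Nat.le_induction with
      | base => exact hsub hAMP.2.2.1 hy
      | succ j hj _ => exact hsub (hAMP.2.2.2 j hj).2.2.1.1 hy
    simp [hzag k hk, hw k hk, hzag (k + 1) (by lia), hw (k + 1) (by lia)]
  · obtain ⟨x, hx, x', hx', hne⟩ := hnt
    have hpos : 0 < ‖x - x'‖ := norm_sub_pos_iff.2 hne
    have hαF : α ≤ ℓF := by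
      have h₁ := hFsmono x hx x' hx'
      have h₂ := real_inner_le_norm (x - x') (F x - F x')
      have h₃ := mul_le_mul_of_nonneg_left (hFlip x hx x' hx') hpos.le
      refine le_of_mul_le_mul_right ?_ (pow_pos hpos 2)
      linarith
    have ha' : a ≤ 1 / 4 := by
      refine le_of_mul_le_mul_right ?_ hℓF
      linarith
    have hmem := hAMP.mem hZconvex (fun _ => ⟨ha, ha'.trans (by norm_num)⟩) hk
    exact amp_energy_step hZconvex hα ha ha' haF haG hFlip hFsmono hGconv hGgrad hGlip
      hmem.1 hmem.2 hy hm hp hq hc
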